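/- Let A, B, C be finite sets (the sets of tuples satisfying three candidate guards) and let c_r ≥ 0 and c_e ≥ 0 be real constants. Suppose A ∩ C = ∅ and merging A with B is not beneficial, i.e. |A ∩ B| · (c_r + c_e) ≤ c_e · |A ∪ B|. Then the transitive merge of A with the merged guard B ∪ C is also not beneficial: |A ∪ B ∪ C| · (c_r + 3·c_e) ≥ |A| · (c_r + c_e) + |B ∪ C| · (c_r + 2·c_e). -/

import Mathlib

/-!
Compare costs tuple by tuple. Merging guards `X` and `Y`, with `m` and `n` policies, saves one read
on every tuple of `X ∩ Y`, and costs `n` extra policy evaluations on every tuple of `X \ Y` and `m`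
on every tuple of `Y \ X`. When `A ∩ C ⊆ B`, replacing `B` by `B ∪ C` changes neither `A ∩ B` nor
`A \ B`, so the saving stays the same while the extra evaluations can only increase.
-/

section MergeCost

open Finset

variable {α R : Type*} [CommSemiring R]

/-- The cost of evaluating a guarded expression: `X` is the set of tuples satisfying the guard, so
that `sel(guard) = #X`, and `m` is the number of policies in its partition. -/
def guardCost (c_r c_e : R) (X : Finset α) (m : ℕ) : R :=
  #X * (c_r + m * c_e)

variable [DecidableEq α]

/-- Merging the guards `X` and `Y`, whose partitions contain `m` and `n` policies, is beneficial:
the merged guard is strictly cheaper than the two separate ones. The partitions are taken to be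
disjoint, so the merged one contains `m + n` policies. -/
def MergeBeneficial [LT R] (c_r c_e : R) (X : Finset α) (m : ℕ) (Y : Finset α) (n : ℕ) : Prop :=
  guardCost c_r c_e (X ∪ Y) (m + n) < guardCost c_r c_e X m + guardCost c_r c_e Y n

theorem card_union_eq_card_sdiff_add_card_sdiff_add_card_inter (X Y : Finset α) :
    #(X ∪ Y) = #(X \ Y) + #(Y \ X) + #(X ∩ Y) := by
  rw [← card_sdiff_add_card X Y, ← card_sdiff_add_card_inter Y X, inter_comm Y X, add_assoc]

theorem guardCost_union_add_card_inter_mul (c_r c_e : R) (X Y : Finset α) (m n : ℕ) :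
    guardCost c_r c_e (X ∪ Y) (m + n) + #(X ∩ Y) * c_r =
      guardCost c_r c_e X m + guardCost c_r c_e Y n +
        c_e * (n * #(X \ Y) + m * #(Y \ X)) := by
  have hX : #X = #(X \ Y) + #(X ∩ Y) := (card_sdiff_add_card_inter X Y).symm
  have hY : #Y = #(Y \ X) + #(X ∩ Y) := by rw [inter_comm, card_sdiff_add_card_inter]
  simp only [guardCost, card_union_eq_card_sdiff_add_card_sdiff_add_card_inter, hX, hY]
  push_cast
  ring

variable [LinearOrder R] [IsStrictOrderedRing R] {c_r c_e : R}

theorem mergeBeneficial_iff {X Y : Finset α} {m n : ℕ} :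
    MergeBeneficial c_r c_e X m Y n ↔
      c_e * (n * #(X \ Y) + m * #(Y \ X)) < #(X ∩ Y) * c_r := by
  rw [MergeBeneficial, ← add_lt_add_iff_right (#(X ∩ Y) * c_r),
    guardCost_union_add_card_inter_mul, add_lt_add_iff_left]

/-- Equation 9 of the paper, with the denominators cleared. -/
theorem mergeBeneficial_one_one_iff {X Y : Finset α} :
    MergeBeneficial c_r c_e X 1 Y 1 ↔ c_e * #(X ∪ Y) < #(X ∩ Y) * (c_r + c_e) := by
  rw [mergeBeneficial_iff, ← add_lt_add_iff_right (c_e * #(X ∩ Y)),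
    card_union_eq_card_sdiff_add_card_sdiff_add_card_inter]
  push_cast
  ring_nf

theorem transitive_merge_not_beneficial_general {A B C : Finset α} {m n k : ℕ}
    (hce : 0 ≤ c_e) (hAC : A ∩ C ⊆ B) (hAB : ¬ MergeBeneficial c_r c_e A m B n) :
    ¬ MergeBeneficial c_r c_e A m (B ∪ C) (n + k) := by
  have h_inter : A ∩ (B ∪ C) = A ∩ B := by
    rw [inter_union_distrib_left, union_eq_left.2 (subset_inter inter_subset_left hAC)]
  have h_sdiff : A \ (B ∪ C) = A \ B := by
    rw [← sdiff_inter_self_left, h_inter, sdiff_inter_self_left]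
  rw [mergeBeneficial_iff, not_lt] at hAB ⊢
  calc (#(A ∩ (B ∪ C)) : R) * c_r
      = #(A ∩ B) * c_r := by rw [h_inter]
    _ ≤ c_e * (n * #(A \ B) + m * #(B \ A)) := hAB
    _ ≤ c_e * ((n + k : ℕ) * #(A \ (B ∪ C)) + m * #((B ∪ C) \ A)) := by
      rw [h_sdiff]
      gcongr
      · exact Nat.le_add_right n k
      · exact subset_union_left

end MergeCost

/-- Corollary 1 of the paper: if `A ∩ C = ∅` and merging `A` with `B` is not
beneficial, then the transitive merge of `A` with the merged guard `B ∪ C`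
(whose partition contains 3 policies) is also not beneficial. -/
theorem transitive_merge_not_beneficial
    {α : Type*} [DecidableEq α] (A B C : Finset α)
    (c_r c_e : ℝ) (hcr : 0 ≤ c_r) (hce : 0 ≤ c_e)
    (hAC : A ∩ C = ∅)
    (hAB : ((A ∩ B).card : ℝ) * (c_r + c_e) ≤ c_e * ((A ∪ B).card : ℝ)) :
    ((A ∪ B ∪ C).card : ℝ) * (c_r + 3 * c_e) ≥
      (A.card : ℝ) * (c_r + c_e) + ((B ∪ C).card : ℝ) * (c_r + 2 * c_e) := by
  have h := transitive_merge_not_beneficial_general (m := 1) (n := 1) (k := 1) hce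
    (hAC.trans_subset B.empty_subset) (mergeBeneficial_one_one_iff.not.2 hAB.not_gt)
  simpa [MergeBeneficial, guardCost] using h
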